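/- Let G ⊆ ℂ be a finite union of pairwise disjoint Jordan arcs and Jordan curves. Then there exists a sequence (Kₙ) of compact subsets of G, each having connected complement in ℂ, such that every compact subset K ⊆ G with connected complement in ℂ is contained in some Kₙ. -/

import Mathlib

open Set Metric Bornology Filter

/-- A *hole* of `E` is a nonempty bounded connected component of `ℂ \ E`. -/
def IsHole (E C : Set ℂ) : Prop :=
  (∃ z ∈ Eᶜ, C = connectedComponentIn Eᶜ z) ∧ Bornology.IsBounded C

/-- A compact set `K` contained in an open set `Ω` is `Ω`-*convex* if every hole of `K`
contains a point of `ℂ \ Ω`. -/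
def OmegaConvex (Ω K : Set ℂ) : Prop :=
  ∀ C : Set ℂ, IsHole K C → (C ∩ Ωᶜ).Nonempty

/-- The *polynomial hull* of `K`: the union of `K` and all of its holes. -/
def polyHull (K : Set ℂ) : Set ℂ :=
  K ∪ {z | z ∈ Kᶜ ∧ Bornology.IsBounded (connectedComponentIn Kᶜ z)}

/-- A sequence of maps is *eventually injective* on `G`: for every compact `K ⊆ G`, the maps
are eventually injective on a neighbourhood of `K` in `G`. -/
def EventuallyInjective (G : Set ℂ) (φ : ℕ → ℂ → ℂ) : Prop :=
  ∀ K : Set ℂ, K ⊆ G → IsCompact K →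
    ∃ N : ℕ, ∀ n ≥ N, ∃ U : Set ℂ, IsOpen U ∧ K ⊆ U ∧ U ⊆ G ∧ Set.InjOn (φ n) U

/-- `f` is `(Φ, G, Ω)`-*universal*: the family `{f ∘ φ n : n ∈ ℕ}` is dense in `H(G)` for the
topology of locally uniform convergence, i.e. every `g` holomorphic on `G` can be approximated
uniformly on every compact subset of `G` by functions `f ∘ φ n`. -/
def UniversalFor (G : Set ℂ) (φ : ℕ → ℂ → ℂ) (f : ℂ → ℂ) : Prop :=
  ∀ g : ℂ → ℂ, DifferentiableOn ℂ g G →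
    ∀ K : Set ℂ, K ⊆ G → IsCompact K → ∀ ε : ℝ, 0 < ε →
      ∃ n : ℕ, ∀ z ∈ K, ‖f (φ n z) - g z‖ < ε

/-- `E` has no hole (for a domain: simple connectivity). -/
def HasNoHole (E : Set ℂ) : Prop := ¬ ∃ C : Set ℂ, IsHole E C

/-- A *Jordan curve*: the image of the unit circle under an injective continuous map. -/
def IsJordanCurve (C : Set ℂ) : Prop :=
  ∃ γ : ℂ → ℂ, ContinuousOn γ (Metric.sphere 0 1) ∧ Set.InjOn γ (Metric.sphere 0 1) ∧
    C = γ '' Metric.sphere 0 1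

/-- A *Jordan arc*: the image of `[0,1]` under an injective continuous map. -/
def IsJordanArc (C : Set ℂ) : Prop :=
  ∃ γ : ℝ → ℂ, ContinuousOn γ (Set.Icc 0 1) ∧ Set.InjOn γ (Set.Icc 0 1) ∧
    C = γ '' Set.Icc 0 1

/-- A compact set is *regular* if its boundary is a union of Jordan curves. -/
def RegularCompact (K : Set ℂ) : Prop :=
  ∃ 𝒞 : Set (Set ℂ), (∀ C ∈ 𝒞, IsJordanCurve C) ∧ frontier K = ⋃₀ 𝒞

/-- `K` is `Ω`-*connected*: it has no hole if `Ω` is simply connected, and has at least one hole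
if `Ω` is not simply connected. -/
def OmegaConnectedSet (Ω K : Set ℂ) : Prop :=
  (HasNoHole Ω → HasNoHole K) ∧ (¬ HasNoHole Ω → ∃ C : Set ℂ, IsHole K C)

/-- Membership in the family `M(Ω)` of nonempty compact subsets of `Ω` that are regular,
connected, `Ω`-connected and `Ω`-convex. -/
def MemM (Ω K : Set ℂ) : Prop :=
  K.Nonempty ∧ IsCompact K ∧ K ⊆ Ω ∧ RegularCompact K ∧ IsConnected K ∧
    OmegaConnectedSet Ω K ∧ OmegaConvex Ω K

/-- `f` is `(Φ, M)`-*universal*: for every `K ∈ M`, the restrictions of the `f ∘ φ n` to `K`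
are dense in `C(K)`. -/
def MUniversal (M : Set (Set ℂ)) (φ : ℕ → ℂ → ℂ) (f : ℂ → ℂ) : Prop :=
  ∀ K ∈ M, ∀ h : ℂ → ℂ, ContinuousOn h K → ∀ ε : ℝ, 0 < ε →
    ∃ n : ℕ, ∀ z ∈ K, ‖f (φ n z) - h z‖ < ε

/-!
The topology of `Kᶜ` for a compact plane set `K` is read off from logarithms (Borsuk): `Kᶜ` is
connected iff for every `z ∉ K` the function `x ↦ x - z` has a continuous logarithm on `K`.
Continuous logarithms restrict to subsets, glue along disjoint closed sets and exist on compact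
simply connected sets, so arcs do not separate the plane, and neither does a finite disjoint union
of compact pieces each of which lies in some nonseparating compact subset of the union.

A compact set `K ⊆ G` with connected complement meets only finitely many of the arcs and curves
constituting `G`. Replacing its trace on each of them by the whole piece, when the trace is the
whole piece, and by a nonseparating subset from a countable list otherwise, one obtains a
nonseparating compact set containing `K`, and only countably many sets arise in this way.
-/

/-- `f` has a *continuous logarithm* on `s`. Applied to `f = (· - z)`, this is the analytic
substitute for "`s` does not separate `z` from `∞`". -/
def HasLogOn {X : Type*} [TopologicalSpace X] (f : X → ℂ) (s : Set X) : Prop :=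
  ∃ L : X → ℂ, ContinuousOn L s ∧ EqOn (Complex.exp ∘ L) f s

open Function Topology

namespace HasLogOn

variable {X : Type*} [TopologicalSpace X] {f g : X → ℂ} {s t : Set X}

theorem mono (h : HasLogOn f t) (hst : s ⊆ t) : HasLogOn f s := by
  obtain ⟨L, hL, hexp⟩ := h
  exact ⟨L, hL.mono hst, hexp.mono hst⟩

theorem const {c : ℂ} (hc : c ≠ 0) : HasLogOn (fun _ : X => c) s :=
  ⟨fun _ => Complex.log c, continuousOn_const, fun _ _ => Complex.exp_log hc⟩

theorem of_norm_sub_lt (hf : HasLogOn f s) (hg : ContinuousOn g s)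
    (hfg : ∀ x ∈ s, ‖g x - f x‖ < ‖f x‖) : HasLogOn g s := by
  obtain ⟨L, hL, hexp⟩ := hf
  have hf_cont : ContinuousOn f s := hL.cexp.congr fun x hx => (hexp hx).symm
  have hf_ne : ∀ x ∈ s, f x ≠ 0 := fun x hx => norm_pos_iff.1 ((norm_nonneg _).trans_lt (hfg x hx))
  have hslit : ∀ x ∈ s, g x / f x ∈ Complex.slitPlane := fun x hx => by
    have hlt : ‖(g x - f x) / f x‖ < 1 := by
      rw [norm_div, div_lt_one (norm_pos_iff.2 (hf_ne x hx))]
      exact hfg x hx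
    have hmem := Complex.mem_slitPlane_of_norm_lt_one hlt
    rwa [sub_div, div_self (hf_ne x hx), add_sub_cancel] at hmem
  refine ⟨fun x => L x + Complex.log (g x / f x),
    hL.add ((hg.div hf_cont hf_ne).clog hslit), fun x hx => ?_⟩
  calc Complex.exp (L x + Complex.log (g x / f x))
      = f x * (g x / f x) := by
        rw [Complex.exp_add, Complex.exp_log (Complex.slitPlane_ne_zero (hslit x hx))]
        exact congrArg (· * _) (hexp hx)
    _ = g x := mul_div_cancel₀ (g x) (hf_ne x hx)

theorem iUnion {ι : Type*} {A : ι → Set X} (hlf : LocallyFinite A) (hclosed : ∀ i, IsClosed (A i))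
    (hdisj : Pairwise (Disjoint on A)) (h : ∀ i, HasLogOn f (A i)) :
    HasLogOn f (⋃ i, A i) := by
  classical
  choose L hL hexp using h
  let M : X → ℂ := fun x => if hx : ∃ i, x ∈ A i then L hx.choose x else 0
  have hM : ∀ i, EqOn M (L i) (A i) := fun i x hx => by
    have hex : ∃ j, x ∈ A j := ⟨i, hx⟩
    have hi : hex.choose = i := hdisj.eq (not_disjoint_iff.2 ⟨x, hex.choose_spec, hx⟩)
    simp only [M, dif_pos hex, hi]
  refine ⟨M, hlf.continuousOn_iUnion hclosed fun i => (hL i).congr (hM i), fun x hx => ?_⟩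
  obtain ⟨i, hi⟩ := mem_iUnion.1 hx
  exact (congrArg Complex.exp (hM i hi)).trans (hexp i hi)

theorem exists_continuousMap_of_isClosed [NormalSpace X] (h : HasLogOn f s) (hs : IsClosed s) :
    ∃ L : C(X, ℂ), EqOn (Complex.exp ∘ L) f s := by
  obtain ⟨L, hL, hexp⟩ := h
  obtain ⟨M, hM⟩ := ContinuousMap.exists_restrict_eq hs
    ⟨s.domRestrict L, continuousOn_iff_continuous_domRestrict.1 hL⟩
  refine ⟨M, fun x hx => ?_⟩
  have hML : M x = L x := DFunLike.congr_fun hM (⟨x, hx⟩ : s)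
  exact (congrArg Complex.exp hML).trans (hexp hx)

end HasLogOn

section SimplyConnected

variable {X : Type*} [TopologicalSpace X] [SimplyConnectedSpace X] [LocallyPathConnectedSpace X]

theorem exists_continuousMap_exp_comp_eq {f : X → ℂ} (hf : Continuous f) (hf0 : ∀ x, f x ≠ 0) :
    ∃ L : C(X, ℂ), Complex.exp ∘ L = f := by
  obtain ⟨x₀⟩ := (inferInstance : Nonempty X)
  obtain ⟨L, ⟨-, hL⟩, -⟩ := Complex.isCoveringMapOn_exp.existsUnique_continuousMap_lifts
    ⟨f, hf⟩ (Complex.exp_log (hf0 x₀)) hf0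
  exact ⟨L, hL⟩

theorem hasLogOn_range_of_isClosedEmbedding {Y : Type*} [TopologicalSpace Y] [NormalSpace Y]
    {γ : X → Y} (hγ : IsClosedEmbedding γ) {f : Y → ℂ} (hf : ContinuousOn f (range γ))
    (hf0 : ∀ y ∈ range γ, f y ≠ 0) : HasLogOn f (range γ) := by
  obtain ⟨L, hL⟩ := exists_continuousMap_exp_comp_eq
    (hf.comp_continuous hγ.continuous mem_range_self) fun x => hf0 _ (mem_range_self x)
  obtain ⟨M, hM⟩ := L.exists_extension' hγ
  refine ⟨M, M.continuous.continuousOn, ?_⟩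
  rintro _ ⟨x, rfl⟩
  exact (congrArg Complex.exp (congrFun hM x)).trans (congrFun hL x)

-- Redefine `f` on `U` as `exp` of an extension of the given logarithm: this removes the zeros of
-- `f` and does not change `f` off `U`.
theorem HasLogOn.compl_of_frontier_subset [NormalSpace X] {f : X → ℂ} {K U : Set X}
    (h : HasLogOn f K) (hK : IsClosed K) (hf : Continuous f) (hU : frontier U ⊆ K)
    (hf0 : ∀ x ∉ U, f x ≠ 0) : HasLogOn f Uᶜ := by
  classical
  obtain ⟨M, hM⟩ := h.exists_continuousMap_of_isClosed hK
  let φ : X → ℂ := U.piecewise (Complex.exp ∘ M) f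
  have hφ : Continuous φ :=
    (Complex.continuous_exp.comp M.continuous).piecewise (fun x hx => hM (hU hx)) hf
  have hφ_eq : EqOn φ f Uᶜ := piecewise_eqOn_compl U _ f
  have hφ0 : ∀ x, φ x ≠ 0 := fun x => by
    by_cases hx : x ∈ U
    · rw [show φ x = Complex.exp (M x) from piecewise_eq_of_mem _ _ _ hx]
      exact Complex.exp_ne_zero _
    · rw [hφ_eq hx]
      exact hf0 x hx
  obtain ⟨L, hL⟩ := exists_continuousMap_exp_comp_eq hφ hφ0
  exact ⟨L, L.continuous.continuousOn, fun x hx => (congrFun hL x).trans (hφ_eq hx)⟩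

end SimplyConnected

theorem not_hasLogOn_sub_sphere (z : ℂ) {R : ℝ} (hR : 0 < R) :
    ¬ HasLogOn (· - z) (sphere z R) := by
  rintro ⟨L, hL, hexp⟩
  let q : ℝ → ℂ := fun t => L (circleMap z R t) - t * Complex.I
  have hq : Continuous q :=
    (hL.comp_continuous (continuous_circleMap z R) (circleMap_mem_sphere z hR.le)).sub (by fun_prop)
  have hexp_q : ∀ t, Complex.exp (q t) = R := fun t => by
    have hLt : Complex.exp (L (circleMap z R t)) = circleMap z R t - z :=
      hexp (circleMap_mem_sphere z hR.le t)
    rw [Complex.exp_sub, hLt, circleMap_sub_center, circleMap_zero,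
      mul_div_cancel_right₀ _ (Complex.exp_ne_zero _)]
  have hq_lift : ∀ t, (⟨_, (q t).exp_ne_zero⟩ : {w : ℂ // w ≠ 0}) = ⟨_, (q 0).exp_ne_zero⟩ :=
    fun t => Subtype.ext ((hexp_q t).trans (hexp_q 0).symm)
  have hq_const : q (2 * Real.pi) = q 0 :=
    Complex.isCoveringMap_exp.const_of_comp hq
      (fun t t' => (hq_lift t).trans (hq_lift t').symm) _ _
  have hperiod : circleMap z R (2 * Real.pi) = circleMap z R 0 := (periodic_circleMap z R).eq
  simp only [q, hperiod, Complex.ofReal_zero, zero_mul, sub_zero, sub_eq_self] at hq_const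
  exact Complex.two_pi_I_ne_zero (by exact_mod_cast hq_const)

theorem frontier_connectedComponentIn_subset_compl {X : Type*} [TopologicalSpace X]
    [LocallyConnectedSpace X] {F : Set X} (hF : IsOpen F) (x : X) :
    frontier (connectedComponentIn F x) ⊆ Fᶜ := by
  intro p hp hpF
  rw [hF.connectedComponentIn.frontier_eq] at hp
  obtain ⟨y, hyp, hyx⟩ :=
    mem_closure_iff.1 hp.1 _ hF.connectedComponentIn (mem_connectedComponentIn hpF)
  have heq : connectedComponentIn F p = connectedComponentIn F x :=
    (connectedComponentIn_eq hyp).trans (connectedComponentIn_eq hyx).symm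
  exact hp.2 (heq ▸ mem_connectedComponentIn hpF)

section NormedSpace

variable {E : Type*} [NormedAddCommGroup E] [NormedSpace ℝ E]

theorem isPreconnected_setOf_lt_norm (hE : 1 < Module.rank ℝ E) {R : ℝ} (hR : 0 ≤ R) :
    IsPreconnected {x : E | R < ‖x‖} := by
  have himage : {x : E | R < ‖x‖} = (fun p : E × ℝ => p.2 • p.1) '' sphere 0 1 ×ˢ Ioi R := by
    ext x
    constructor
    · intro hx
      have hx0 : ‖x‖ ≠ 0 := (hR.trans_lt hx).ne'
      exact ⟨(‖x‖⁻¹ • x, ‖x‖), ⟨by simp [norm_smul, hx0], hx⟩, smul_inv_smul₀ hx0 x⟩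
    · rintro ⟨⟨u, r⟩, ⟨hu, hr⟩, rfl⟩
      have hr : R < r := hr
      simpa [norm_smul, mem_sphere_zero_iff_norm.1 hu] using hr.trans_le (le_abs_self r)
  rw [himage]
  exact ((isPreconnected_sphere hE 0 1).prod isPreconnected_Ioi).image _ (by fun_prop)

theorem isConnected_compl_of_not_isBounded_connectedComponentIn (hE : 1 < Module.rank ℝ E)
    {K : Set E} (hK : IsBounded K)
    (hcomp : ∀ z ∉ K, ¬ IsBounded (connectedComponentIn Kᶜ z)) : IsConnected Kᶜ := by
  have : Nontrivial E := rank_pos_iff_nontrivial.1 (zero_lt_one.trans hE)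
  obtain ⟨R, hR, hKR⟩ := hK.exists_pos_norm_le
  have hfar : {x : E | R < ‖x‖} ⊆ Kᶜ := fun x hx hxK => (hKR x hxK).not_gt hx
  obtain ⟨p, hp⟩ := NormedSpace.exists_lt_norm ℝ E R
  refine ⟨⟨p, hfar hp⟩, isPreconnected_of_forall p fun z hz => ?_⟩
  obtain ⟨q, hqz, hq⟩ : ∃ q ∈ connectedComponentIn Kᶜ z, R < ‖q‖ := by
    by_contra! hle
    exact hcomp z hz (isBounded_iff_forall_norm_le.2 ⟨R, hle⟩)
  exact ⟨{x : E | R < ‖x‖} ∪ connectedComponentIn Kᶜ z,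
    union_subset hfar (connectedComponentIn_subset _ _), Or.inl hp,
    Or.inr (mem_connectedComponentIn hz),
    (isPreconnected_setOf_lt_norm hE hR.le).union q hq hqz isPreconnected_connectedComponentIn⟩

end NormedSpace

section Separation

variable {K : Set ℂ}

theorem HasLogOn.sub_of_dist_lt {w z : ℂ} (h : HasLogOn (· - w) K)
    (hlt : ∀ x ∈ K, dist w z < dist x w) : HasLogOn (· - z) K :=
  h.of_norm_sub_lt (by fun_prop) fun x hx => by
    simpa [dist_eq_norm] using hlt x hx

theorem hasLogOn_sub_of_norm_lt {w : ℂ} (hw : w ≠ 0) (hlt : ∀ x ∈ K, ‖x‖ < ‖w‖) :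
    HasLogOn (· - w) K :=
  (HasLogOn.const (neg_ne_zero.2 hw)).of_norm_sub_lt (by fun_prop) fun x hx => by
    simpa using hlt x hx

theorem eventually_hasLogOn_sub_iff (hK : IsClosed K) {w : ℂ} (hw : w ∉ K) :
    ∀ᶠ z in 𝓝 w, HasLogOn (· - w) K ↔ HasLogOn (· - z) K := by
  obtain ⟨δ, hδ, hball⟩ := Metric.isOpen_iff.1 hK.isOpen_compl w hw
  have hfar : ∀ x ∈ K, δ ≤ dist x w := fun x hx => not_lt.1 fun hlt => hball hlt hx
  filter_upwards [ball_mem_nhds w (half_pos hδ)] with z hz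
  rw [mem_ball] at hz
  refine ⟨fun h => h.sub_of_dist_lt fun x hx => ?_, fun h => h.sub_of_dist_lt fun x hx => ?_⟩
  · rw [dist_comm]
    linarith [hfar x hx]
  · linarith [hfar x hx, dist_triangle x z w]

theorem hasLogOn_sub_of_isConnected_compl (hK : IsCompact K) (hconn : IsConnected Kᶜ) {z : ℂ}
    (hz : z ∉ K) : HasLogOn (· - z) K := by
  obtain ⟨R, hR, hKR⟩ := hK.isBounded.exists_pos_norm_lt
  have hnorm : ‖(R : ℂ)‖ = R := Complex.norm_of_nonneg hR.le
  have hRK : (R : ℂ) ∉ K := fun h => (hKR _ h).ne hnorm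
  have hlog : HasLogOn (· - (R : ℂ)) K :=
    hasLogOn_sub_of_norm_lt (by exact_mod_cast hR.ne') (by rwa [hnorm])
  refine (hconn.isPreconnected.induction₂
    (fun w y => HasLogOn (· - w) K ↔ HasLogOn (· - y) K) ?_ ?_ ?_ hRK hz).1 hlog
  · exact fun w hw => nhdsWithin_le_nhds (eventually_hasLogOn_sub_iff hK.isClosed hw)
  · exact fun _ _ _ _ _ _ => Iff.trans
  · exact fun _ _ _ _ => Iff.symm

theorem not_isBounded_connectedComponentIn_of_hasLogOn_sub (hK : IsClosed K) {z : ℂ} (hz : z ∉ K)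
    (h : HasLogOn (· - z) K) : ¬ IsBounded (connectedComponentIn Kᶜ z) := by
  intro hbdd
  set U := connectedComponentIn Kᶜ z
  have hzU : z ∈ U := mem_connectedComponentIn hz
  obtain ⟨R, hUR⟩ := hbdd.subset_ball z
  have hfrontier : frontier U ⊆ K := by
    simpa using frontier_connectedComponentIn_subset_compl hK.isOpen_compl z
  have hlog : HasLogOn (· - z) Uᶜ := h.compl_of_frontier_subset hK (by fun_prop) hfrontier
    fun x hx => sub_ne_zero.2 (ne_of_mem_of_not_mem hzU hx).symm
  refine not_hasLogOn_sub_sphere z (pos_of_mem_ball (hUR hzU)) (hlog.mono ?_)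
  exact fun x hx hxU => (mem_ball.1 (hUR hxU)).ne hx

theorem isConnected_compl_iff_hasLogOn_sub (hK : IsCompact K) :
    IsConnected Kᶜ ↔ ∀ z ∉ K, HasLogOn (· - z) K := by
  refine ⟨fun h z => hasLogOn_sub_of_isConnected_compl hK h, fun h => ?_⟩
  refine isConnected_compl_of_not_isBounded_connectedComponentIn ?_ hK.isBounded fun z hz =>
    not_isBounded_connectedComponentIn_of_hasLogOn_sub hK.isClosed hz (h z hz)
  simp only [Complex.rank_real_complex, Nat.one_lt_ofNat]

theorem isConnected_compl_range {X : Type*} [TopologicalSpace X] [CompactSpace X]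
    [SimplyConnectedSpace X] [LocallyPathConnectedSpace X] {γ : X → ℂ} (hγ : Continuous γ)
    (hinj : Injective γ) : IsConnected (range γ)ᶜ :=
  (isConnected_compl_iff_hasLogOn_sub (isCompact_range hγ)).2 fun z hz =>
    hasLogOn_range_of_isClosedEmbedding (hγ.isClosedEmbedding hinj) (by fun_prop) fun _ hy =>
      sub_ne_zero.2 (ne_of_mem_of_not_mem hy hz)

theorem isConnected_compl_image_Icc {γ : ℝ → ℂ} {a b : ℝ} (hγ : ContinuousOn γ (Icc a b))
    (hinj : InjOn γ (Icc a b)) : IsConnected (γ '' Icc a b)ᶜ := by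
  rcases lt_or_ge b a with hba | hab
  · simpa [Icc_eq_empty_of_lt hba] using (isConnected_univ : IsConnected (univ : Set ℂ))
  have := (convex_Icc a b).contractibleSpace (nonempty_Icc.2 hab)
  have := (convex_Icc a b).locallyPathConnectedSpace
  rw [← range_domRestrict]
  exact isConnected_compl_range (continuousOn_iff_continuous_domRestrict.1 hγ) hinj.injective

theorem isConnected_compl_iUnion {ι : Type*} [Finite ι] {A : ι → Set ℂ}
    (hA : ∀ i, IsCompact (A i)) (hdisj : Pairwise (Disjoint on A))
    (h : ∀ i, ∃ K, IsCompact K ∧ IsConnected Kᶜ ∧ A i ⊆ K ∧ K ⊆ ⋃ j, A j) :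
    IsConnected (⋃ i, A i)ᶜ := by
  refine (isConnected_compl_iff_hasLogOn_sub (isCompact_iUnion hA)).2 fun z hz => ?_
  refine .iUnion (locallyFinite_of_finite A) (fun i => (hA i).isClosed) hdisj fun i => ?_
  obtain ⟨K, hK, hconn, hAK, hKA⟩ := h i
  exact (hasLogOn_sub_of_isConnected_compl hK hconn fun hzK => hz (hKA hzK)).mono hAK

end Separation

/-- `𝒜` is a *proper exhaustion* of `C`: a countable family of compact subsets of `C` with
connected complement such that every compact proper subset of `C` lies in one of them. The set `C`
itself is not required to have connected complement, so that Jordan curves admit proper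
exhaustions. -/
structure IsProperExhaustion (𝒜 : Set (Set ℂ)) (C : Set ℂ) : Prop where
  countable : 𝒜.Countable
  subset : ∀ A ∈ 𝒜, A ⊆ C
  isCompact : ∀ A ∈ 𝒜, IsCompact A
  isConnected_compl : ∀ A ∈ 𝒜, IsConnected Aᶜ
  exists_superset : ∀ K ⊂ C, IsCompact K → ∃ A ∈ 𝒜, K ⊆ A

theorem isProperExhaustion_singleton {C : Set ℂ} (hC : IsCompact C) (hconn : IsConnected Cᶜ) :
    IsProperExhaustion {C} C where
  countable := countable_singleton C
  subset _ hA := hA.subset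
  isCompact _ hA := hA ▸ hC
  isConnected_compl _ hA := hA ▸ hconn
  exists_superset _ hK _ := ⟨C, rfl, hK.subset⟩

theorem IsJordanArc.isCompact {C : Set ℂ} (hC : IsJordanArc C) : IsCompact C := by
  obtain ⟨γ, hγ, -, rfl⟩ := hC
  exact isCompact_Icc.image_of_continuousOn hγ

theorem IsJordanArc.nonempty {C : Set ℂ} (hC : IsJordanArc C) : C.Nonempty := by
  obtain ⟨γ, -, -, rfl⟩ := hC
  exact (nonempty_Icc.2 zero_le_one).image γ

theorem IsJordanArc.exists_isProperExhaustion {C : Set ℂ} (hC : IsJordanArc C) :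
    ∃ 𝒜, IsProperExhaustion 𝒜 C := by
  have hcpt := hC.isCompact
  obtain ⟨γ, hγ, hinj, rfl⟩ := hC
  exact ⟨_, isProperExhaustion_singleton hcpt (isConnected_compl_image_Icc hγ hinj)⟩

theorem IsJordanCurve.exists_circle_parametrization {C : Set ℂ} (hC : IsJordanCurve C) :
    ∃ γ : Circle → ℂ, Continuous γ ∧ Injective γ ∧ range γ = C := by
  obtain ⟨γ, hγ, hinj, rfl⟩ := hC
  have hmem : ∀ u : Circle, (u : ℂ) ∈ sphere (0 : ℂ) 1 :=
    fun u => mem_sphere_zero_iff_norm.2 u.norm_coe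
  refine ⟨fun u => γ u, hγ.comp_continuous continuous_subtype_val hmem,
    fun u v huv => Subtype.ext (hinj (hmem u) (hmem v) huv), ?_⟩
  ext x
  constructor
  · rintro ⟨u, rfl⟩
    exact mem_image_of_mem γ (hmem u)
  · rintro ⟨w, hw, rfl⟩
    exact ⟨⟨w, by simpa [Submonoid.unitSphere] using hw⟩, rfl⟩

theorem IsJordanCurve.isCompact {C : Set ℂ} (hC : IsJordanCurve C) : IsCompact C := by
  obtain ⟨γ, hγ, -, rfl⟩ := hC.exists_circle_parametrization
  exact isCompact_range hγ

theorem IsJordanCurve.nonempty {C : Set ℂ} (hC : IsJordanCurve C) : C.Nonempty := by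
  obtain ⟨γ, -, -, rfl⟩ := hC.exists_circle_parametrization
  exact range_nonempty γ

theorem exists_rat_subset_image_Icc_of_periodic {X : Type*} [TopologicalSpace X] {p : ℝ → X}
    {T : ℝ} (hp : Continuous p) (hper : Periodic p T) (hT : 0 < T) {K : Set X}
    (hK : IsClosed K) (hKp : K ⊂ range p) :
    ∃ a b : ℚ, a < b ∧ K ⊆ p '' Icc (b : ℝ) (a + T) := by
  obtain ⟨hsub, _, ⟨θ, rfl⟩, hθ⟩ := ssubset_iff_exists.1 hKp
  obtain ⟨l, u, hlu, hIoo⟩ := (hK.isOpen_compl.preimage hp).exists_Ioo_subset ⟨θ, hθ⟩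
  obtain ⟨a, hla, hau⟩ := exists_rat_btwn hlu
  obtain ⟨b, hab, hbu⟩ := exists_rat_btwn hau
  refine ⟨a, b, by exact_mod_cast hab, fun x hx => ?_⟩
  obtain ⟨t₀, rfl⟩ := hsub hx
  obtain ⟨t, ht, htp⟩ := hper.exists_mem_Ico hT t₀ a
  refine ⟨t, ⟨not_lt.1 fun htb => ?_, ht.2.le⟩, htp.symm⟩
  exact hIoo ⟨hla.trans_le ht.1, htb.trans hbu⟩ (htp ▸ hx)

theorem IsJordanCurve.exists_isProperExhaustion {C : Set ℂ} (hC : IsJordanCurve C) :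
    ∃ 𝒜, IsProperExhaustion 𝒜 C := by
  obtain ⟨γ, hγ, hinj, rfl⟩ := hC.exists_circle_parametrization
  let p : ℝ → ℂ := γ ∘ Circle.exp
  have hp : Continuous p := hγ.comp Circle.exp.continuous
  have hper : Periodic p (2 * Real.pi) := Circle.periodic_exp.comp γ
  have hrange : range p = range γ := Circle.exp_surjective.range_comp γ
  let arc : ℚ × ℚ → Set ℂ := fun q => p '' Icc (q.2 : ℝ) (q.1 + 2 * Real.pi)
  refine ⟨arc '' {q | q.1 < q.2}, (to_countable _).image _, ?_, ?_, ?_, fun K hK hKcpt => ?_⟩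
  · rintro _ ⟨q, -, rfl⟩
    exact (image_subset_range p _).trans hrange.subset
  · rintro _ ⟨q, -, rfl⟩
    exact isCompact_Icc.image hp
  · rintro _ ⟨q, hq, rfl⟩
    have hq : (q.1 : ℝ) < q.2 := Rat.cast_lt.2 hq
    exact isConnected_compl_image_Icc hp.continuousOn
      (hinj.comp_injOn (Circle.exp_injOn_Icc (by linarith)))
  · obtain ⟨a, b, hab, hKab⟩ := exists_rat_subset_image_Icc_of_periodic hp hper Real.two_pi_pos
      hKcpt.isClosed (hrange ▸ hK)
    exact ⟨_, mem_image_of_mem arc (show (a, b) ∈ {q : ℚ × ℚ | q.1 < q.2} from hab), hKab⟩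

section Union

variable {ι : Type*} {g : ι → Set ℂ} {𝒜 : ι → Set (Set ℂ)}

theorem exists_finite_sUnion_superset (hlf : LocallyFinite g) (hdisj : Pairwise (Disjoint on g))
    (hg : ∀ i, IsCompact (g i)) (h𝒜 : ∀ i, IsProperExhaustion (𝒜 i) (g i)) {K : Set ℂ}
    (hKg : K ⊆ ⋃ i, g i) (hK : IsCompact K) (hconn : IsConnected Kᶜ) :
    ∃ S ⊆ ⋃ i, insert (g i) (𝒜 i), S.Finite ∧ K ⊆ ⋃₀ S ∧ IsConnected (⋃₀ S)ᶜ := by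
  have hpiece : ∀ i, ∃ A ∈ insert (g i) (𝒜 i), A ⊆ g i ∧ IsCompact A ∧ g i ∩ K ⊆ A ∧
      (A ⊆ K ∨ IsConnected Aᶜ) := fun i => by
    by_cases hgK : g i ⊆ K
    · exact ⟨g i, mem_insert _ _, subset_rfl, hg i, inter_subset_left, .inl hgK⟩
    · obtain ⟨A, hA, hKA⟩ := (h𝒜 i).exists_superset (g i ∩ K)
        (inter_ssubset_left_iff.2 hgK) ((hg i).inter hK)
      exact ⟨A, mem_insert_of_mem _ hA, (h𝒜 i).subset A hA, (h𝒜 i).isCompact A hA, hKA,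
        .inr ((h𝒜 i).isConnected_compl A hA)⟩
  choose A hA hAg hAcpt hKA hAconn using hpiece
  let s : Set ι := {i | (g i ∩ K).Nonempty}
  have hs : s.Finite := hlf.finite_nonempty_inter_compact hK
  have : Finite s := hs
  have hKs : K ⊆ ⋃ i : s, A i := fun x hx => by
    obtain ⟨i, hi⟩ := mem_iUnion.1 (hKg hx)
    exact mem_iUnion.2 ⟨⟨i, x, hi, hx⟩, hKA i ⟨hi, hx⟩⟩
  refine ⟨A '' s, ?_, hs.image A, ?_⟩
  · rintro _ ⟨i, -, rfl⟩
    exact mem_iUnion_of_mem i (hA i)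
  rw [sUnion_image, biUnion_eq_iUnion]
  refine ⟨hKs, isConnected_compl_iUnion (fun i => hAcpt i) (fun i j hij => ?_) fun i => ?_⟩
  · exact (hdisj (Subtype.coe_ne_coe.2 hij)).mono (hAg i) (hAg j)
  · rcases hAconn i with hAK | hAc
    · exact ⟨K, hK, hconn, hAK, hKs⟩
    · exact ⟨A i, hAcpt i, hAc, subset_rfl, subset_iUnion (fun j : s => A j) i⟩

theorem exists_compact_sequence_of_isProperExhaustion [Countable ι] (hlf : LocallyFinite g)
    (hdisj : Pairwise (Disjoint on g)) (hg : ∀ i, IsCompact (g i))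
    (h𝒜 : ∀ i, IsProperExhaustion (𝒜 i) (g i)) :
    ∃ K : ℕ → Set ℂ,
      (∀ n, K n ⊆ ⋃ i, g i ∧ IsCompact (K n) ∧ IsConnected (K n)ᶜ) ∧
      ∀ K' : Set ℂ, K' ⊆ ⋃ i, g i → IsCompact K' → IsConnected K'ᶜ → ∃ n, K' ⊆ K n := by
  let 𝒯 : Set (Set ℂ) := ⋃ i, insert (g i) (𝒜 i)
  have h𝒯 : ∀ A ∈ 𝒯, A ⊆ ⋃ i, g i ∧ IsCompact A := fun A hA => by
    obtain ⟨i, rfl | hi⟩ := mem_iUnion.1 hA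
    · exact ⟨subset_iUnion g i, hg i⟩
    · exact ⟨((h𝒜 i).subset A hi).trans (subset_iUnion g i), (h𝒜 i).isCompact A hi⟩
  let 𝒮 : Set (Set (Set ℂ)) := {S | (S.Finite ∧ S ⊆ 𝒯) ∧ IsConnected (⋃₀ S)ᶜ}
  have h𝒮 : 𝒮.Countable :=
    (countable_ofPred_finite_subset (countable_iUnion fun i => (h𝒜 i).countable.insert _)).mono
      fun S hS => hS.1
  obtain ⟨S, hS⟩ := h𝒮.exists_eq_range
    ⟨∅, ⟨finite_empty, empty_subset _⟩, by simpa using (isConnected_univ (α := ℂ))⟩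
  have hS_mem : ∀ n, S n ∈ 𝒮 := fun n => hS ▸ mem_range_self n
  refine ⟨fun n => ⋃₀ S n, fun n => ?_, fun K' hK'g hK' hconn => ?_⟩
  · obtain ⟨⟨hfin, hsub⟩, hn⟩ := hS_mem n
    exact ⟨sUnion_subset fun A hA => (h𝒯 A (hsub hA)).1,
      hfin.isCompact_sUnion fun A hA => (h𝒯 A (hsub hA)).2, hn⟩
  · obtain ⟨R, hRsub, hRfin, hK'R, hRconn⟩ :=
      exists_finite_sUnion_superset hlf hdisj hg h𝒜 hK'g hK' hconn
    obtain ⟨n, rfl⟩ : R ∈ range S := hS ▸ ⟨⟨hRfin, hRsub⟩, hRconn⟩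
    exact ⟨n, hK'R⟩

theorem exists_compact_sequence_of_finite_jordan_union_general (hlf : LocallyFinite g)
    (hjordan : ∀ i, IsJordanArc (g i) ∨ IsJordanCurve (g i))
    (hdisj : Pairwise (Disjoint on g)) :
    ∃ K : ℕ → Set ℂ,
      (∀ n, K n ⊆ ⋃ i, g i ∧ IsCompact (K n) ∧ IsConnected (K n)ᶜ) ∧
      ∀ K' : Set ℂ, K' ⊆ ⋃ i, g i → IsCompact K' → IsConnected K'ᶜ → ∃ n, K' ⊆ K n := by
  have : Countable ι := countable_univ_iff.1 <| hlf.countable_univ fun i =>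
    (hjordan i).elim IsJordanArc.nonempty IsJordanCurve.nonempty
  choose 𝒜 h𝒜 using fun i => (hjordan i).elim IsJordanArc.exists_isProperExhaustion
    IsJordanCurve.exists_isProperExhaustion
  exact exists_compact_sequence_of_isProperExhaustion hlf hdisj
    (fun i => (hjordan i).elim IsJordanArc.isCompact IsJordanCurve.isCompact) h𝒜

end Union

/-- Lemma `lem-Jordan-curve-seq-comp`. -/
theorem exists_compact_sequence_of_finite_jordan_union
    (G : Set ℂ) (m : ℕ) (g : Fin m → Set ℂ) (hG : G = ⋃ i, g i)
    (harc : ∀ i, IsJordanArc (g i) ∨ IsJordanCurve (g i))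
    (hdisj : ∀ i j : Fin m, i ≠ j → g i ∩ g j = ∅) :
    ∃ K : ℕ → Set ℂ,
      (∀ n, K n ⊆ G ∧ IsCompact (K n) ∧ IsConnected (K n)ᶜ) ∧
      ∀ K' : Set ℂ, K' ⊆ G → IsCompact K' → IsConnected K'ᶜ → ∃ n, K' ⊆ K n := by
  subst hG
  exact exists_compact_sequence_of_finite_jordan_union_general (locallyFinite_of_finite g) harc
    fun i j hij => disjoint_iff_inter_eq_empty.2 (hdisj i j hij)
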